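/- arXiv:2502.15215 — 5 statements merged into one kernel-verified Lean document; each statement's English description precedes it below -/
import Mathlib

section
/- Let 1 ≤ d ≤ p and let μ = μ_1 ⊗ ⋯ ⊗ μ_p be the product probability measure on X = X_1 × ⋯ × X_p. Suppose {f_S^1 : S ⊆ {1,…,p}, |S| ≤ d} and {f_S^2 : S ⊆ {1,…,p}, |S| ≤ d} are two families of μ-integrable functions such that f_∅^1 and f_∅^2 are constant functions and, for each nonempty S, f_S^1 and f_S^2 depend only on the coordinates indexed by S and satisfy the sum-to-zero condition with respect to (μ_j)_{j∈S}. Then ∑_{S ⊆ {1,…,p}, |S| ≤ d} f_S^1 = ∑_{S ⊆ {1,…,p}, |S| ≤ d} f_S^2 μ-almost everywhere if and only if f_S^1 = f_S^2 μ-almost everywhere for every S with |S| ≤ d. -/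
open MeasureTheory

/-!
Put `g S = f1 S - f2 S`, so that `∑ g S = 0` a.e., and average over one coordinate `j`. By Fubini
this kills the terms with `j ∈ S` (sum-to-zero) and fixes those with `j ∉ S` (they do not depend
on the coordinate `j`), so the partial sum over `j ∉ S` vanishes a.e., and by subtraction so does
the one over `j ∈ S` (`ae_sum_filter_notMem`). Splitting in this way along every coordinate
separates the subsets from one another and leaves `g T = 0` a.e. for each single `T`.

Averaging over `j` is expressed through the map `(z, t) ↦ Function.update z j t`, which is measure
preserving from `(⨂ μ i) ⊗ μ j` to `⨂ μ i` (`measurePreserving_update`): resampling one coordinate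
of a product measure does not change the law. Slices are integrable only for almost every `z`, so
the sum-to-zero condition passes from `f1` and `f2` to `g` only almost everywhere.
-/

/-- Resampling the coordinate `j` independently preserves a product of probability measures. -/
lemma measurePreserving_update {p : ℕ} (μ : Fin p → Measure ℝ) [∀ j, IsProbabilityMeasure (μ j)]
    (j : Fin p) :
    MeasurePreserving (fun q : (Fin p → ℝ) × ℝ => Function.update q.1 j q.2)
      ((Measure.pi μ).prod (μ j)) (Measure.pi μ) := by
  have hm : Measurable (fun q : (Fin p → ℝ) × ℝ => Function.update q.1 j q.2) := by
    refine measurable_pi_lambda _ fun i => ?_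
    by_cases h : i = j
    · subst h
      simpa using measurable_snd
    · simp only [Function.update_of_ne h]
      fun_prop
  refine ⟨hm, (Measure.pi_eq fun s hs => ?_).symm⟩
  rw [Measure.map_apply hm (MeasurableSet.univ_pi hs)]
  have hpre : (fun q : (Fin p → ℝ) × ℝ => Function.update q.1 j q.2) ⁻¹' (Set.univ.pi s)
      = (Set.univ.pi (Function.update s j Set.univ)) ×ˢ (s j) := by
    ext ⟨z, t⟩
    simp only [Set.mem_preimage, Set.mem_pi, Set.mem_univ, true_imp_iff, Set.mem_prod]
    constructor
    · refine fun h => ⟨fun i => ?_, by simpa using h j⟩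
      by_cases hi : i = j
      · subst hi; simp
      · simpa [hi] using h i
    · rintro ⟨h, ht⟩ i
      by_cases hi : i = j
      · subst hi; simpa using ht
      · simpa [hi] using h i
  rw [hpre, Measure.prod_prod, Measure.pi_pi, ← Finset.prod_erase_mul _ _ (Finset.mem_univ j),
    ← Finset.prod_erase_mul Finset.univ (fun i => μ i (s i)) (Finset.mem_univ j)]
  simp only [Function.update_self, measure_univ, mul_one]
  congr 1
  refine Finset.prod_congr rfl fun i hi => ?_
  rw [Function.update_of_ne (Finset.ne_of_mem_erase hi)]

lemma ae_integrable_update {p : ℕ} (μ : Fin p → Measure ℝ) [∀ j, IsProbabilityMeasure (μ j)]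
    (j : Fin p) {h : (Fin p → ℝ) → ℝ} (hh : Integrable h (Measure.pi μ)) :
    ∀ᵐ z ∂(Measure.pi μ), Integrable (fun t => h (Function.update z j t)) (μ j) :=
  ((measurePreserving_update μ j).integrable_comp_of_integrable hh).prod_right_ae

/-- Averaging an a.e. vanishing sum over the coordinate `j` leaves only the terms that do not
involve `j`. -/
lemma ae_sum_filter_notMem {p : ℕ} (μ : Fin p → Measure ℝ) [∀ j, IsProbabilityMeasure (μ j)]
    (g : Finset (Fin p) → (Fin p → ℝ) → ℝ) (F : Finset (Finset (Fin p))) (j : Fin p)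
    (hint : ∀ S ∈ F, Integrable (g S) (Measure.pi μ))
    (hdep : ∀ S ∈ F, ∀ x y : Fin p → ℝ, (∀ i ∈ S, x i = y i) → g S x = g S y)
    (hstz : ∀ S ∈ F, j ∈ S →
      ∀ᵐ z ∂(Measure.pi μ), ∫ t, g S (Function.update z j t) ∂(μ j) = 0)
    (hsum : ∀ᵐ x ∂(Measure.pi μ), ∑ S ∈ F, g S x = 0) :
    ∀ᵐ x ∂(Measure.pi μ), ∑ S ∈ F with j ∉ S, g S x = 0 := by
  have h1 : ∀ᵐ z ∂(Measure.pi μ), ∀ᵐ t ∂(μ j), ∑ S ∈ F, g S (Function.update z j t) = 0 :=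
    Measure.ae_ae_of_ae_prod ((measurePreserving_update μ j).quasiMeasurePreserving.ae hsum)
  have h2 : ∀ᵐ z ∂(Measure.pi μ), ∀ S ∈ F,
      Integrable (fun t => g S (Function.update z j t)) (μ j) :=
    (Finset.eventually_all F).2 fun S hS => ae_integrable_update μ j (hint S hS)
  have h3 : ∀ᵐ z ∂(Measure.pi μ), ∀ S ∈ F, j ∈ S →
      ∫ t, g S (Function.update z j t) ∂(μ j) = 0 := by
    refine (Finset.eventually_all F).2 fun S hS => ?_
    by_cases hj : j ∈ S
    · filter_upwards [hstz S hS hj] with z hz _ using hz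
    · exact Filter.Eventually.of_forall fun z h => absurd h hj
  filter_upwards [h1, h2, h3] with z hz1 hz2 hz3
  have h4 : ∑ S ∈ F, ∫ t, g S (Function.update z j t) ∂(μ j) = 0 := by
    rw [← integral_finsetSum F hz2, integral_congr_ae hz1, integral_zero]
  rw [← h4, Finset.sum_filter]
  refine Finset.sum_congr rfl fun S hS => ?_
  by_cases hj : j ∈ S
  · simp [hj, hz3 S hS hj]
  · have : ∀ t, g S (Function.update z j t) = g S z := fun t =>
      hdep S hS _ _ fun i hi => Function.update_of_ne (ne_of_mem_of_not_mem hi hj) _ _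
    simp [hj, this]

/-- An a.e. vanishing ANOVA sum has a.e. vanishing components. -/
lemma ae_eq_zero_of_sum {p : ℕ} (μ : Fin p → Measure ℝ) [∀ j, IsProbabilityMeasure (μ j)]
    (g : Finset (Fin p) → (Fin p → ℝ) → ℝ) (F : Finset (Finset (Fin p)))
    (hint : ∀ S ∈ F, Integrable (g S) (Measure.pi μ))
    (hdep : ∀ S ∈ F, ∀ x y : Fin p → ℝ, (∀ i ∈ S, x i = y i) → g S x = g S y)
    (hstz : ∀ S ∈ F, ∀ j ∈ S,
      ∀ᵐ z ∂(Measure.pi μ), ∫ t, g S (Function.update z j t) ∂(μ j) = 0)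
    (hsum : ∀ᵐ x ∂(Measure.pi μ), ∑ S ∈ F, g S x = 0)
    (T : Finset (Fin p)) (hT : T ∈ F) : ∀ᵐ x ∂(Measure.pi μ), g T x = 0 := by
  have key : ∀ L : Finset (Fin p),
      ∀ᵐ x ∂(Measure.pi μ), ∑ S ∈ F with (∀ i ∈ L, i ∈ S ↔ i ∈ T), g S x = 0 := by
    intro L
    induction L using Finset.induction_on with
    | empty => simpa using hsum
    | insert j L _ ih =>
      have hs := ae_sum_filter_notMem μ g (F.filter fun S => ∀ i ∈ L, i ∈ S ↔ i ∈ T) j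
        (fun S hS => hint S (Finset.mem_filter.1 hS).1)
        (fun S hS => hdep S (Finset.mem_filter.1 hS).1)
        (fun S hS => hstz S (Finset.mem_filter.1 hS).1 j) ih
      filter_upwards [ih, hs] with x hx1 hx2
      have hsplit := Finset.sum_filter_add_sum_filter_not
        (F.filter fun S => ∀ i ∈ L, i ∈ S ↔ i ∈ T) (fun S => j ∈ S) (fun S => g S x)
      rw [hx1, hx2, add_zero] at hsplit
      by_cases hj : j ∈ T
      · rw [← hsplit, Finset.filter_filter]
        refine Finset.sum_congr (Finset.filter_congr fun S _ => ?_) fun _ _ => rfl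
        simp [hj, and_comm]
      · rw [← hx2, Finset.filter_filter]
        refine Finset.sum_congr (Finset.filter_congr fun S _ => ?_) fun _ _ => rfl
        simp [hj, and_comm]
  have hu : F.filter (fun S => ∀ i ∈ Finset.univ, i ∈ S ↔ i ∈ T) = {T} := by
    ext S
    simp only [Finset.mem_filter, Finset.mem_univ, true_imp_iff, Finset.mem_singleton,
      ← Finset.ext_iff]
    exact ⟨fun h => h.2, fun h => ⟨h ▸ hT, h⟩⟩
  have hk := key Finset.univ
  simp only [hu, Finset.sum_singleton] at hk
  exact hk

/-- **Identifiability of the functional ANOVA decomposition** (Proposition 3.1).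
Two families of components satisfying the sum-to-zero condition have μ-a.e. equal sums
iff each pair of components is μ-a.e. equal. -/
theorem anova_identifiability
    (p d : ℕ) (hp : 1 ≤ p) (hd1 : 1 ≤ d) (hdp : d ≤ p)
    (X : Fin p → Set ℝ) (hXmeas : ∀ j, MeasurableSet (X j))
    (μ : Fin p → Measure ℝ) [hprob : ∀ j, IsProbabilityMeasure (μ j)]
    (hsupp : ∀ j, μ j (X j)ᶜ = 0)
    (f1 f2 : Finset (Fin p) → (Fin p → ℝ) → ℝ)
    (hint1 : ∀ S : Finset (Fin p), S.card ≤ d → Integrable (f1 S) (Measure.pi μ))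
    (hint2 : ∀ S : Finset (Fin p), S.card ≤ d → Integrable (f2 S) (Measure.pi μ))
    (hconst1 : ∃ c : ℝ, ∀ x, f1 ∅ x = c)
    (hconst2 : ∃ c : ℝ, ∀ x, f2 ∅ x = c)
    (hdep1 : ∀ S : Finset (Fin p), S.Nonempty → S.card ≤ d →
      ∀ x y : Fin p → ℝ, (∀ j ∈ S, x j = y j) → f1 S x = f1 S y)
    (hdep2 : ∀ S : Finset (Fin p), S.Nonempty → S.card ≤ d →
      ∀ x y : Fin p → ℝ, (∀ j ∈ S, x j = y j) → f2 S x = f2 S y)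
    (hstz1 : ∀ S : Finset (Fin p), S.Nonempty → S.card ≤ d → ∀ j ∈ S,
      ∀ z : Fin p → ℝ, ∫ t in X j, f1 S (Function.update z j t) ∂(μ j) = 0)
    (hstz2 : ∀ S : Finset (Fin p), S.Nonempty → S.card ≤ d → ∀ j ∈ S,
      ∀ z : Fin p → ℝ, ∫ t in X j, f2 S (Function.update z j t) ∂(μ j) = 0) :
    ((∀ᵐ x ∂(Measure.pi μ),
        ∑ S ∈ Finset.univ.powerset.filter (fun S : Finset (Fin p) => S.card ≤ d), f1 S x
          = ∑ S ∈ Finset.univ.powerset.filter (fun S : Finset (Fin p) => S.card ≤ d), f2 S x)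
      ↔ (∀ S : Finset (Fin p), S.card ≤ d →
          ∀ᵐ x ∂(Measure.pi μ), f1 S x = f2 S x)) := by
  -- Each `X j` has full measure, so restricting to it changes nothing.
  have hres : ∀ j, (μ j).restrict (X j) = μ j := fun j =>
    Measure.restrict_eq_self_of_ae_mem (mem_ae_iff.2 (hsupp j))
  simp only [hres] at hstz1 hstz2
  have hdep (f : Finset (Fin p) → (Fin p → ℝ) → ℝ) (hc : ∃ c : ℝ, ∀ x, f ∅ x = c)
      (hd : ∀ S : Finset (Fin p), S.Nonempty → S.card ≤ d →
        ∀ x y : Fin p → ℝ, (∀ j ∈ S, x j = y j) → f S x = f S y)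
      (S : Finset (Fin p)) (hS : S.card ≤ d) (x y : Fin p → ℝ)
      (hxy : ∀ i ∈ S, x i = y i) : f S x = f S y := by
    rcases S.eq_empty_or_nonempty with rfl | hne
    · obtain ⟨c, hc⟩ := hc
      rw [hc, hc]
    · exact hd S hne hS x y hxy
  constructor
  · intro h T hT
    have hz := ae_eq_zero_of_sum μ (fun S x => f1 S x - f2 S x)
      (Finset.univ.powerset.filter (fun S : Finset (Fin p) => S.card ≤ d))
      (fun S hS => (hint1 S (Finset.mem_filter.1 hS).2).sub (hint2 S (Finset.mem_filter.1 hS).2))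
      (fun S hS x y hxy => by
        have hS' := (Finset.mem_filter.1 hS).2
        simp only [hdep f1 hconst1 hdep1 S hS' x y hxy, hdep f2 hconst2 hdep2 S hS' x y hxy])
      (fun S hS j hj => by
        have hS' := (Finset.mem_filter.1 hS).2
        filter_upwards [ae_integrable_update μ j (hint1 S hS'),
          ae_integrable_update μ j (hint2 S hS')] with z hz1 hz2
        rw [integral_sub hz1 hz2, hstz1 S ⟨j, hj⟩ hS' j hj z, hstz2 S ⟨j, hj⟩ hS' j hj z,
          sub_zero])
      (by
        filter_upwards [h] with x hx
        rw [Finset.sum_sub_distrib, hx, sub_self])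
      T (by simpa using hT)
    filter_upwards [hz] with x hx using sub_eq_zero.1 hx
  · intro h
    have h' := (Finset.eventually_all
      (Finset.univ.powerset.filter (fun S : Finset (Fin p) => S.card ≤ d))).2
      fun S hS => h S (Finset.mem_filter.1 hS).2
    filter_upwards [h'] with x hx using Finset.sum_congr rfl hx
end

section
/- Let f(x) = β_0 + ∑_{S ⊆ {1,…,p}, 1 ≤ |S| ≤ d} f_S(x_S), where each f_S is bounded measurable, depends only on the coordinates indexed by S, and satisfies the sum-to-zero condition with respect to (μ_j)_{j∈S}. Then for every j ∈ {1,…,p} and every x ∈ X, the SHAP value satisfies φ_j(f,x) = ∑_{S ⊆ {1,…,p} : j ∈ S, |S| ≤ d} f_S(x_S)/|S|. -/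
/-!
The value function of a sum-to-zero component is
`v_{f_S}(x_T) = f_S(x)` if `S ⊆ T`, and `0` otherwise: in the second case some `i ∈ S \ T` is
integrated out, and integrating the `i`-th coordinate first gives `0` by the sum-to-zero condition
(`integral_pi_eq_zero`). Hence the marginal contribution of `j ∉ T` is the sum of the `f_S(x)` with
`j ∈ S` and `S \ {j} ⊆ T`. After exchanging sums, the coefficient of `f_S(x)` is the total Shapley
weight of the `T` with `S \ {j} ⊆ T ⊆ {1,…,p} \ {j}`, which is `1/|S|` (`sum_shapley_weight`);
this is a discrete Beta-function identity (`sum_powerset_factorial`).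
-/

open MeasureTheory

/-- A discrete form of `∫₀¹ tᵃ (1 - t)ᶜ = a! c! / (a + c + 1)!`, with the factor
`(t + (1 - t))^|B| = 1` expanded over the subsets of `B`. -/
lemma sum_powerset_factorial {α : Type*} [DecidableEq α] (B : Finset α) (a c : ℕ) :
    (∑ R ∈ B.powerset, (a + R.card).factorial * (c + B.card - R.card).factorial)
      * (a + c + 1).factorial
      = (a + c + B.card + 1).factorial * (a.factorial * c.factorial) := by
  induction B using Finset.induction_on generalizing a c with
  | empty => simp; ring
  | insert b B hb ih =>
    -- Subsets avoiding `b` give the case `(a, c + 1)` for `B`, those containing it `(a + 1, c)`.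
    rw [Finset.sum_powerset_insert hb, Finset.card_insert_of_notMem hb]
    have h1 := ih a (c + 1)
    have h2 := ih (a + 1) c
    have e1 : ∑ R ∈ B.powerset, (a + R.card).factorial * (c + (B.card + 1) - R.card).factorial
        = ∑ R ∈ B.powerset, (a + R.card).factorial * (c + 1 + B.card - R.card).factorial := by
      refine Finset.sum_congr rfl fun R _ => ?_
      congr 2; omega
    have e2 : ∑ R ∈ B.powerset, (a + (insert b R).card).factorial
          * (c + (B.card + 1) - (insert b R).card).factorial
        = ∑ R ∈ B.powerset, (a + 1 + R.card).factorial * (c + B.card - R.card).factorial := by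
      refine Finset.sum_congr rfl fun R hR => ?_
      rw [Finset.card_insert_of_notMem fun h => hb (Finset.mem_powerset.1 hR h)]
      congr 2 <;> omega
    rw [e1, e2]
    rw [show a + (c + 1) + 1 = (a + c + 1) + 1 by ring, Nat.factorial_succ (a + c + 1),
      Nat.factorial_succ c, show a + (c + 1) + B.card + 1 = a + c + (B.card + 1) + 1 by ring] at h1
    rw [show a + 1 + c + 1 = (a + c + 1) + 1 by ring, Nat.factorial_succ (a + c + 1),
      Nat.factorial_succ a, show a + 1 + c + B.card + 1 = a + c + (B.card + 1) + 1 by ring] at h2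
    refine Nat.eq_of_mul_eq_mul_left (Nat.succ_pos (a + c + 1)) ?_
    simp only [Nat.succ_eq_add_one]
    linear_combination h1 + h2

/-- The Shapley weights of the coalitions `T ∌ j` that contain `S \ {j}` add up to `1/|S|`. -/
lemma sum_shapley_weight {p : ℕ} (S : Finset (Fin p)) (j : Fin p) (hj : j ∈ S) :
    ∑ T ∈ (Finset.univ.erase j).powerset with S.erase j ⊆ T,
      ((T.card.factorial * (p - T.card - 1).factorial : ℝ) / (p.factorial : ℝ))
      = 1 / (S.card : ℝ) := by
  have hc : Sᶜ.card + S.card = p := by simp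
  have hS : 0 < S.card := Finset.card_pos.2 ⟨j, hj⟩
  have hre : ∑ T ∈ (Finset.univ.erase j).powerset with S.erase j ⊆ T,
      ((T.card.factorial * (p - T.card - 1).factorial : ℝ) / (p.factorial : ℝ))
      = ∑ R ∈ Sᶜ.powerset, ((((S.card - 1) + R.card).factorial
          * (0 + Sᶜ.card - R.card).factorial : ℝ) / (p.factorial : ℝ)) := by
    -- Write `T = (S \ {j}) ∪ R` with `R` ranging over the subsets of the complement of `S`.
    symm
    refine Finset.sum_bij' (fun R _ => S.erase j ∪ R) (fun T _ => T \ S) ?_ ?_ ?_ ?_ ?_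
    · intro R hR
      rw [Finset.mem_powerset] at hR
      simp only [Finset.mem_filter, Finset.mem_powerset]
      refine ⟨fun i hi => ?_, Finset.subset_union_left⟩
      have := @hR i
      simp only [Finset.mem_union, Finset.mem_erase, Finset.mem_compl, Finset.mem_univ] at *
      grind
    · intro T _
      simp only [Finset.mem_powerset]
      intro i hi
      simp at hi ⊢
      exact hi.2
    · intro R hR
      rw [Finset.mem_powerset] at hR
      ext i
      have := @hR i
      simp only [Finset.mem_union, Finset.mem_erase, Finset.mem_compl, Finset.mem_sdiff] at *
      grind
    · intro T hT
      simp only [Finset.mem_filter, Finset.mem_powerset] at hT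
      ext i
      have h1 := @hT.1 i
      have h2 := @hT.2 i
      simp only [Finset.mem_union, Finset.mem_erase, Finset.mem_sdiff, Finset.mem_univ] at *
      grind
    · intro R hR
      rw [Finset.mem_powerset] at hR
      have hd : Disjoint (S.erase j) R := by
        rw [Finset.disjoint_left]
        intro i hi hi'
        exact (Finset.mem_compl.1 (hR hi')) (Finset.mem_of_mem_erase hi)
      have : p - (S.erase j ∪ R).card - 1 = 0 + Sᶜ.card - R.card := by
        rw [Finset.card_union_of_disjoint hd, Finset.card_erase_of_mem hj]
        omega
      rw [this, Finset.card_union_of_disjoint hd, Finset.card_erase_of_mem hj]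
  rw [hre, ← Finset.sum_div]
  have key := sum_powerset_factorial Sᶜ (S.card - 1) 0
  obtain ⟨s, hs⟩ : ∃ s, S.card = s + 1 := ⟨S.card - 1, by omega⟩
  rw [hs] at key ⊢
  rw [show s + 1 - 1 + 0 + Sᶜ.card + 1 = p by omega] at key
  simp only [Nat.add_sub_cancel, add_zero, Nat.factorial_succ, Nat.factorial_zero, mul_one] at key ⊢
  have key' : (∑ R ∈ Sᶜ.powerset, ((s + R.card).factorial : ℝ)
      * ((0 + Sᶜ.card - R.card).factorial : ℝ)) * (((s + 1 : ℕ) : ℝ) * (s.factorial : ℝ))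
      = (p.factorial : ℝ) * (s.factorial : ℝ) := by exact_mod_cast key
  have hp : (p.factorial : ℝ) ≠ 0 := by exact_mod_cast p.factorial_ne_zero
  have hsf : (s.factorial : ℝ) ≠ 0 := by exact_mod_cast s.factorial_ne_zero
  have hs1 : ((s + 1 : ℕ) : ℝ) ≠ 0 := by exact_mod_cast s.succ_ne_zero
  rw [div_eq_div_iff hp hs1]
  apply mul_right_cancel₀ hsf
  linear_combination key'

/-- Resampling one coordinate independently leaves a product probability measure unchanged. -/
lemma map_update_prod_pi {p : ℕ} (μ : Fin p → Measure ℝ) [∀ j, IsProbabilityMeasure (μ j)]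
    (i : Fin p) :
    Measure.map (fun q : (Fin p → ℝ) × ℝ => Function.update q.1 i q.2)
      ((Measure.pi μ).prod (μ i)) = Measure.pi μ := by
  have hm : Measurable (fun q : (Fin p → ℝ) × ℝ => Function.update q.1 i q.2) := measurable_update'
  symm
  refine Measure.pi_eq fun s hs => ?_
  rw [Measure.map_apply hm (MeasurableSet.univ_pi hs)]
  have : (fun q : (Fin p → ℝ) × ℝ => Function.update q.1 i q.2) ⁻¹' Set.univ.pi s
      = (Set.univ.pi (Function.update s i Set.univ)) ×ˢ s i := by
    ext q
    simp only [Set.mem_preimage, Set.mem_pi, Set.mem_univ, true_imp_iff, Set.mem_prod]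
    constructor
    · intro h
      refine ⟨fun k => ?_, by simpa using h i⟩
      by_cases hk : k = i
      · subst hk; simp
      · simpa [hk] using h k
    · rintro ⟨h, h'⟩ k
      by_cases hk : k = i
      · subst hk; simpa using h'
      · simpa [hk] using h k
  rw [this, Measure.prod_prod, Measure.pi_pi,
    ← Finset.mul_prod_erase _ _ (Finset.mem_univ i),
    ← Finset.mul_prod_erase _ (fun k => μ k (s k)) (Finset.mem_univ i)]
  simp only [Function.update_self, measure_univ, one_mul]
  rw [mul_comm]
  congr 1
  refine Finset.prod_congr rfl fun k hk => ?_
  rw [Function.update_of_ne (Finset.ne_of_mem_erase hk)]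

/-- Fubini: an integral against a product measure vanishes as soon as the inner integral in one
coordinate does. -/
lemma integral_pi_eq_zero {p : ℕ} (μ : Fin p → Measure ℝ) [∀ j, IsProbabilityMeasure (μ j)]
    (i : Fin p) (g : (Fin p → ℝ) → ℝ) (hg : Measurable g) (C : ℝ) (hC : ∀ z, |g z| ≤ C)
    (h0 : ∀ z, ∫ t, g (Function.update z i t) ∂(μ i) = 0) :
    ∫ z, g z ∂(Measure.pi μ) = 0 := by
  have hm : Measurable (fun q : (Fin p → ℝ) × ℝ => Function.update q.1 i q.2) := measurable_update'
  rw [← map_update_prod_pi μ i, integral_map hm.aemeasurable hg.aestronglyMeasurable,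
    integral_prod]
  · simp [h0]
  · exact Integrable.of_bound (hg.comp hm).aestronglyMeasurable C
      (Filter.Eventually.of_forall fun q => hC _)

/-- **SHAP values of a GAᵈM satisfying the sum-to-zero condition** (Proposition 3.2).
For f(x) = β₀ + ∑_{1 ≤ |S| ≤ d} f_S(x_S) with sum-to-zero components,
φ_j(f,x) = ∑_{S ∋ j, |S| ≤ d} f_S(x_S)/|S|. -/
theorem shap_of_anova
    (p d : ℕ) (hp : 1 ≤ p) (hd1 : 1 ≤ d) (hdp : d ≤ p)
    (X : Fin p → Set ℝ) (hXmeas : ∀ j, MeasurableSet (X j))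
    (μ : Fin p → Measure ℝ) [hprob : ∀ j, IsProbabilityMeasure (μ j)]
    (hsupp : ∀ j, μ j (X j)ᶜ = 0)
    (β₀ : ℝ)
    (f : Finset (Fin p) → (Fin p → ℝ) → ℝ)
    (hmeas : ∀ S : Finset (Fin p), 1 ≤ S.card → S.card ≤ d → Measurable (f S))
    (hbdd : ∀ S : Finset (Fin p), 1 ≤ S.card → S.card ≤ d → ∃ C : ℝ, ∀ x, |f S x| ≤ C)
    (hdep : ∀ S : Finset (Fin p), 1 ≤ S.card → S.card ≤ d →
      ∀ x y : Fin p → ℝ, (∀ j ∈ S, x j = y j) → f S x = f S y)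
    (hstz : ∀ S : Finset (Fin p), 1 ≤ S.card → S.card ≤ d → ∀ j ∈ S,
      ∀ z : Fin p → ℝ, ∫ t in X j, f S (Function.update z j t) ∂(μ j) = 0)
    (F : (Fin p → ℝ) → ℝ)
    (hF : ∀ y, F y = β₀ + ∑ S ∈ Finset.univ.powerset.filter
        (fun S : Finset (Fin p) => 1 ≤ S.card ∧ S.card ≤ d), f S y)
    (j : Fin p) (x : Fin p → ℝ) (hx : ∀ i, x i ∈ X i) :
    ∑ T ∈ (Finset.univ.erase j).powerset,
        ((T.card.factorial * (p - T.card - 1).factorial : ℝ) / (p.factorial : ℝ)) *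
          ((∫ z, F (fun i => if i ∈ insert j T then x i else z i) ∂(Measure.pi μ))
            - ∫ z, F (fun i => if i ∈ T then x i else z i) ∂(Measure.pi μ))
      = ∑ S ∈ Finset.univ.powerset.filter
          (fun S : Finset (Fin p) => j ∈ S ∧ S.card ≤ d),
          f S x / (S.card : ℝ) := by
  classical
  have hmix : ∀ T : Finset (Fin p),
      Measurable (fun z : Fin p → ℝ => fun i => if i ∈ T then x i else z i) := by
    intro T
    refine measurable_pi_lambda _ fun i => ?_
    by_cases h : i ∈ T
    · simp [h]
    · simpa [h] using measurable_pi_apply i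
  have hcomp_int : ∀ T S : Finset (Fin p), 1 ≤ S.card → S.card ≤ d →
      Integrable (fun z => f S (fun i => if i ∈ T then x i else z i)) (Measure.pi μ) := by
    intro T S h1 h2
    obtain ⟨C, hC⟩ := hbdd S h1 h2
    exact Integrable.of_bound ((hmeas S h1 h2).comp (hmix T)).aestronglyMeasurable C
      (Filter.Eventually.of_forall fun z => hC _)
  have hval : ∀ T S : Finset (Fin p), 1 ≤ S.card → S.card ≤ d →
      ∫ z, f S (fun i => if i ∈ T then x i else z i) ∂(Measure.pi μ)
        = if S ⊆ T then f S x else 0 := by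
    intro T S h1 h2
    split_ifs with hST
    · have : ∀ z : Fin p → ℝ, f S (fun i => if i ∈ T then x i else z i) = f S x := fun z =>
        hdep S h1 h2 _ _ fun i hi => by simp [hST hi]
      simp [this]
    · obtain ⟨i, hiS, hiT⟩ := Finset.not_subset.1 hST
      obtain ⟨C, hC⟩ := hbdd S h1 h2
      refine integral_pi_eq_zero μ i _ ((hmeas S h1 h2).comp (hmix T)) C (fun z => hC _) ?_
      intro z
      have hcomm : ∀ t : ℝ, (fun k => if k ∈ T then x k else Function.update z i t k)
          = Function.update (fun k => if k ∈ T then x k else z k) i t := by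
        intro t
        ext k
        by_cases hk : k = i
        · subst hk; simp [hiT]
        · simp [hk]
      -- `μ i` is concentrated on `X i`, so restricting it to `X i` changes nothing.
      have hres : (μ i).restrict (X i) = μ i :=
        Measure.restrict_eq_self_of_ae_mem (mem_ae_iff.2 (hsupp i))
      have := hstz S h1 h2 i hiS (fun k => if k ∈ T then x k else z k)
      rw [hres] at this
      simpa only [hcomm] using this
  have hv : ∀ T : Finset (Fin p),
      ∫ z, F (fun i => if i ∈ T then x i else z i) ∂(Measure.pi μ)
        = β₀ + ∑ S ∈ Finset.univ.powerset.filter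
            (fun S : Finset (Fin p) => 1 ≤ S.card ∧ S.card ≤ d), if S ⊆ T then f S x else 0 := by
    intro T
    have hI : ∀ S ∈ Finset.univ.powerset.filter
        (fun S : Finset (Fin p) => 1 ≤ S.card ∧ S.card ≤ d),
        Integrable (fun z => f S (fun i => if i ∈ T then x i else z i)) (Measure.pi μ) :=
      fun S hS => hcomp_int T S (Finset.mem_filter.1 hS).2.1 (Finset.mem_filter.1 hS).2.2
    simp only [hF]
    rw [integral_add (integrable_const _) (integrable_finsetSum _ hI), integral_finsetSum _ hI]
    congr 1
    · simp
    · exact Finset.sum_congr rfl fun S hS =>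
        hval T S (Finset.mem_filter.1 hS).2.1 (Finset.mem_filter.1 hS).2.2
  have hdiff : ∀ T ∈ (Finset.univ.erase j).powerset,
      ((T.card.factorial * (p - T.card - 1).factorial : ℝ) / (p.factorial : ℝ)) *
          ((∫ z, F (fun i => if i ∈ insert j T then x i else z i) ∂(Measure.pi μ))
            - ∫ z, F (fun i => if i ∈ T then x i else z i) ∂(Measure.pi μ))
      = ∑ S ∈ Finset.univ.powerset.filter
            (fun S : Finset (Fin p) => j ∈ S ∧ S.card ≤ d),
          if S.erase j ⊆ T then
            f S x * ((T.card.factorial * (p - T.card - 1).factorial : ℝ) / (p.factorial : ℝ))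
          else 0 := by
    intro T hT
    have hjT : j ∉ T := fun h => by simpa using Finset.mem_powerset.1 hT h
    rw [hv, hv, add_sub_add_left_eq_sub, ← Finset.sum_sub_distrib, Finset.mul_sum]
    -- Components with `j ∉ S` contribute equally to both terms and cancel.
    symm
    refine Finset.sum_subset_zero_on_sdiff ?_ ?_ ?_
    · intro S hS
      simp only [Finset.mem_filter] at hS ⊢
      exact ⟨hS.1, Finset.card_pos.2 ⟨j, hS.2.1⟩, hS.2.2⟩
    · intro S hS
      simp only [Finset.mem_sdiff, Finset.mem_filter] at hS
      have hjS : j ∉ S := fun h => hS.2 ⟨hS.1.1, h, hS.1.2.2⟩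
      simp [Finset.subset_insert_iff_of_notMem hjS]
    · intro S hS
      have hjS : j ∈ S := (Finset.mem_filter.1 hS).2.1
      have hn : ¬ S ⊆ T := fun h => hjT (h hjS)
      simp only [Finset.subset_insert_iff, hn, if_false, sub_zero]
      split_ifs
      · ring
      · ring
  rw [Finset.sum_congr rfl hdiff, Finset.sum_comm]
  refine Finset.sum_congr rfl fun S hS => ?_
  rw [← Finset.sum_filter, ← Finset.mul_sum, sum_shapley_weight S j (Finset.mem_filter.1 hS).2.1]
  ring
end

section
/- Suppose each μ_j (j ∈ {1,…,p}) is a probability measure on a bounded interval X_j ⊆ ℝ whose density with respect to Lebesgue measure is bounded below and above by positive constants. Let S ⊆ {1,…,p} be nonempty, L > 0, and let g_{0,S} : ∏_{j∈S} X_j → ℝ be L-Lipschitz and satisfy the sum-to-zero condition with respect to (μ_j)_{j∈S}. Then there exists a constant C_S > 0 such that for every positive integer K_S there exist coefficients β_{S,1},…,β_{S,K_S} ∈ ℝ and parameters θ_{S,1},…,θ_{S,K_S}, where θ_{S,k} = ((b_{j,k}, γ_{j,k}))_{j∈S} with γ_{j,k} > 0, such that sup_{x_S ∈ ∏_{j∈S}X_j}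 |g_{0,S}(x_S) − ∑_{k=1}^{K_S} β_{S,k} φ_S(x_S|θ_{S,k})| < C_S · |S| / (K_S^{1/|S|} + 1). -/
/-!
Fix `n ≈ K^{1/|S|}`. In one variable, cut `[a, b]` at `n` equally spaced breakpoints `tᵢ` and use
sigmoids of width `γ` so small that they are nearly steps at the `tᵢ`. With nodes `ξ₀, …, ξₙ` the
quasi-interpolant `U f = f ξ₀ + ∑ᵢ (f ξᵢ₊₁ - f ξᵢ) σ((· - tᵢ)/γ)` is a convex combination of values
of `f`, so it has sup norm at most `sup |f|`, and it is within `4 L h` of an `L`-Lipschitz `f`,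
where `h = (b - a)/n` (`abs_sub_interp_le`).

Since `η φ(·|θ) = η - σ((· - b)/γ)`, the centred operator `Q f = U f - ∫ U f dμ` only involves the
basis networks `φ(·|tᵢ, γ)`: it is a combination of `n` of them. It has norm at most `2`
(`abs_centredInterp_le`), and `|f - Q f| ≤ 8 L h` for `L`-Lipschitz `f` with `∫ f dμ = 0`
(`abs_sub_centredInterp_le`).

Applying `Q` successively in all coordinates `j ∈ S` turns `g` into a combination of `n^|S| ≤ K`
tensor product networks. The estimate `g - Q_j A = (g - Q_j g) + Q_j (g - A)` shows that each
coordinate at most doubles the previous error and adds `O(1/n)`, whence a total error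
`(2^|S| - 1) O(1/n)` (`exists_tensor_approx`).
-/

open MeasureTheory

/-- The sigmoid function σ(t) = 1/(1+exp(−t)). -/
noncomputable def sigmoid (t : ℝ) : ℝ := 1 / (1 + Real.exp (-t))

/-- η_j(b,γ) = ∫ σ((x−b)/γ) dμ_j(x). -/
noncomputable def eta (μ : Measure ℝ) (b γ : ℝ) : ℝ := ∫ x, sigmoid ((x - b) / γ) ∂μ

/-- c_j(b,γ) = −(1−η_j(b,γ))/η_j(b,γ). -/
noncomputable def cCoef (μ : Measure ℝ) (b γ : ℝ) : ℝ := -(1 - eta μ b γ) / eta μ b γ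

/-- The basis neural network φ_j(x|(b,γ)) = (1−σ((x−b)/γ)) + c_j(b,γ)·σ((x−b)/γ). -/
noncomputable def basisNN (μ : Measure ℝ) (b γ x : ℝ) : ℝ :=
  (1 - sigmoid ((x - b) / γ)) + cCoef μ b γ * sigmoid ((x - b) / γ)

/-! ### Elementary bounds on the sigmoid -/

lemma sigmoid_pos (t : ℝ) : 0 < sigmoid t := by
  unfold sigmoid; positivity

lemma sigmoid_le_one (t : ℝ) : sigmoid t ≤ 1 := by
  unfold sigmoid
  rw [div_le_one (by positivity)]
  linarith [Real.exp_pos (-t)]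

lemma sigmoid_mono : Monotone sigmoid := by
  intro s t h
  unfold sigmoid
  have : Real.exp (-t) ≤ Real.exp (-s) := Real.exp_le_exp.2 (by linarith)
  gcongr

lemma sigmoid_le_exp (t : ℝ) : sigmoid t ≤ Real.exp t := by
  unfold sigmoid
  rw [div_le_iff₀ (by positivity), mul_add, ← Real.exp_add]
  simp [Real.exp_nonneg]

lemma one_sub_sigmoid_le_exp (t : ℝ) : 1 - sigmoid t ≤ Real.exp (-t) := by
  have h : 1 - sigmoid t = sigmoid t * Real.exp (-t) := by
    unfold sigmoid
    have : (1 + Real.exp (-t)) ≠ 0 := by positivity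
    field_simp
    ring
  rw [h]
  exact mul_le_of_le_one_left (Real.exp_nonneg _) (sigmoid_le_one t)

lemma sigmoid_continuous : Continuous sigmoid := by
  unfold sigmoid
  exact continuous_const.div (by fun_prop) (fun t => by positivity)

lemma integrable_sigmoid (μ : Measure ℝ) [IsProbabilityMeasure μ] (b γ : ℝ) :
    Integrable (fun x => sigmoid ((x - b) / γ)) μ := by
  refine Integrable.of_bound (C := 1) ?_ (Filter.Eventually.of_forall fun x => ?_)
  · exact (sigmoid_continuous.comp (by fun_prop)).aestronglyMeasurable
  · rw [Real.norm_eq_abs, abs_of_pos (sigmoid_pos _)]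
    exact sigmoid_le_one _

lemma eta_pos (μ : Measure ℝ) [IsProbabilityMeasure μ] (b γ : ℝ) : 0 < eta μ b γ := by
  unfold eta
  rw [integral_pos_iff_support_of_nonneg (fun x => (sigmoid_pos _).le) (integrable_sigmoid μ b γ)]
  have : Function.support (fun x => sigmoid ((x - b) / γ)) = Set.univ := by
    ext x; simpa using (sigmoid_pos _).ne'
  rw [this]
  simp

lemma eta_le_one (μ : Measure ℝ) [IsProbabilityMeasure μ] (b γ : ℝ) : eta μ b γ ≤ 1 := by
  unfold eta
  calc _ ≤ ∫ _, (1 : ℝ) ∂μ :=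
        integral_mono (integrable_sigmoid μ b γ) (integrable_const _) fun x => sigmoid_le_one _
    _ = 1 := by simp

/-- Up to the factor `η`, the basis network is the negative of the centred sigmoid. -/
lemma eta_mul_basisNN (μ : Measure ℝ) [IsProbabilityMeasure μ] (b γ x : ℝ) :
    eta μ b γ * basisNN μ b γ x = eta μ b γ - sigmoid ((x - b) / γ) := by
  have := (eta_pos μ b γ).ne'
  unfold basisNN cCoef
  field_simp
  ring

/-! ### Quasi-interpolation in one variable -/

/-- The `i`-th of the nodes `a = ξ₀ < ⋯ < ξₙ = b`. -/
noncomputable def node (a b : ℝ) (n i : ℕ) : ℝ := a + i * ((b - a) / n)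

/-- The breakpoint halfway between the nodes `ξᵢ` and `ξᵢ₊₁`. -/
noncomputable def brk (a b : ℝ) (n i : ℕ) : ℝ := a + (i + 1 / 2) * ((b - a) / n)

/-- The sigmoid width: a fraction `1/n` of the spacing of the nodes, so that a sigmoid is within
`exp (-n) ≤ 1/n` of a step function one spacing away from its breakpoint. -/
noncomputable def wid (a b : ℝ) (n : ℕ) : ℝ := (b - a) / n / n

/-- The operator `Q`, written in terms of the basis networks; it sends `f` to `U f - ∫ U f dμ` with
`U f = f ξ₀ + ∑ᵢ (f ξᵢ₊₁ - f ξᵢ) σ((· - tᵢ)/γ)`. -/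
noncomputable def centredInterp (μ : Measure ℝ) (a b : ℝ) (n : ℕ) (f : ℝ → ℝ) (x : ℝ) : ℝ :=
  ∑ i ∈ Finset.range n, (f (node a b n i) - f (node a b n (i + 1))) *
    (eta μ (brk a b n i) (wid a b n) * basisNN μ (brk a b n i) (wid a b n) x)

lemma wid_pos {a b : ℝ} (hab : a < b) {n : ℕ} (hn : 0 < n) : 0 < wid a b n := by
  have : 0 < b - a := by linarith
  unfold wid; positivity

lemma node_mem {a b : ℝ} (hab : a < b) {n i : ℕ} (hn : 0 < n) (hi : i ≤ n) :
    node a b n i ∈ Set.Icc a b := by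
  have h1 : 0 < b - a := by linarith
  have h2 : (0 : ℝ) < n := by exact_mod_cast hn
  have h3 : (i : ℝ) ≤ n := by exact_mod_cast hi
  unfold node
  constructor
  · have : 0 ≤ (i : ℝ) * ((b - a) / n) := by positivity
    linarith
  · have : (i : ℝ) * ((b - a) / n) ≤ n * ((b - a) / n) := by gcongr
    rw [mul_div_cancel₀ _ h2.ne'] at this
    linarith

lemma antitone_sigmoid_brk {a b : ℝ} (hab : a < b) {n : ℕ} (hn : 0 < n) (x : ℝ) :
    Antitone fun i : ℕ => sigmoid ((x - brk a b n i) / wid a b n) := by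
  intro i j hij
  apply sigmoid_mono
  have h1 : 0 < b - a := by linarith
  have h3 : (i : ℝ) ≤ j := by exact_mod_cast hij
  have := wid_pos hab hn
  unfold brk
  gcongr

lemma antitone_eta_brk (μ : Measure ℝ) [IsProbabilityMeasure μ] {a b : ℝ} (hab : a < b) {n : ℕ}
    (hn : 0 < n) : Antitone fun i : ℕ => eta μ (brk a b n i) (wid a b n) := by
  intro i j hij
  exact integral_mono (integrable_sigmoid μ _ _) (integrable_sigmoid μ _ _)
    fun x => antitone_sigmoid_brk hab hn x hij

/-- Summation by parts: for a decreasing weight sequence `s` in `[0, 1]`, the sum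
`v₀ + ∑ (vᵢ₊₁ - vᵢ) sᵢ` is a convex combination of the `vᵢ`. -/
lemma abs_abel_le {n : ℕ} {v s : ℕ → ℝ} {M : ℝ} (hs : Antitone s) (h0 : ∀ i, 0 ≤ s i)
    (h1 : ∀ i, s i ≤ 1) (hv : ∀ i ≤ n, |v i| ≤ M) :
    |v 0 + ∑ i ∈ Finset.range n, (v (i + 1) - v i) * s i| ≤ M := by
  have key : ∀ m ≤ n, |v 0 + ∑ i ∈ Finset.range m, (v (i + 1) - v i) * s i - v m * s m|
      ≤ M * (1 - s m) := by
    intro m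
    induction m with
    | zero =>
      intro _
      have : v 0 + ∑ i ∈ Finset.range 0, (v (i + 1) - v i) * s i - v 0 * s 0
          = v 0 * (1 - s 0) := by simp; ring
      rw [this, abs_mul, abs_of_nonneg (sub_nonneg.2 (h1 0))]
      exact mul_le_mul_of_nonneg_right (hv 0 (Nat.zero_le _)) (sub_nonneg.2 (h1 0))
    | succ m ih =>
      intro hm
      have hd : 0 ≤ s m - s (m + 1) := sub_nonneg.2 (hs (Nat.le_succ m))
      have e : v 0 + ∑ i ∈ Finset.range (m + 1), (v (i + 1) - v i) * s i - v (m + 1) * s (m + 1)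
          = (v 0 + ∑ i ∈ Finset.range m, (v (i + 1) - v i) * s i - v m * s m)
            + v (m + 1) * (s m - s (m + 1)) := by
        rw [Finset.sum_range_succ]; ring
      rw [e]
      refine (abs_add_le _ _).trans ?_
      have h2 := ih (by omega)
      have h3 : |v (m + 1) * (s m - s (m + 1))| ≤ M * (s m - s (m + 1)) := by
        rw [abs_mul, abs_of_nonneg hd]
        exact mul_le_mul_of_nonneg_right (hv _ hm) hd
      linarith
  have h2 := key n le_rfl
  have h3 : |v n * s n| ≤ M * s n := by
    rw [abs_mul, abs_of_nonneg (h0 n)]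
    exact mul_le_mul_of_nonneg_right (hv n le_rfl) (h0 n)
  have h4 := abs_add_le (v 0 + ∑ i ∈ Finset.range n, (v (i + 1) - v i) * s i - v n * s n)
    (v n * s n)
  rw [sub_add_cancel] at h4
  linarith

lemma centredInterp_eq (μ : Measure ℝ) [IsProbabilityMeasure μ] (a b : ℝ) (n : ℕ) (f : ℝ → ℝ)
    (x : ℝ) : centredInterp μ a b n f x =
      (f (node a b n 0) + ∑ i ∈ Finset.range n, (f (node a b n (i + 1)) - f (node a b n i)) *
        sigmoid ((x - brk a b n i) / wid a b n)) -
      (f (node a b n 0) + ∑ i ∈ Finset.range n, (f (node a b n (i + 1)) - f (node a b n i)) *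
        eta μ (brk a b n i) (wid a b n)) := by
  unfold centredInterp
  rw [add_sub_add_left_eq_sub, ← Finset.sum_sub_distrib]
  refine Finset.sum_congr rfl fun i _ => ?_
  rw [eta_mul_basisNN]
  ring

lemma abs_centredInterp_le (μ : Measure ℝ) [IsProbabilityMeasure μ] {a b : ℝ} (hab : a < b)
    {n : ℕ} (hn : 0 < n) {f : ℝ → ℝ} {M : ℝ} (hf : ∀ x ∈ Set.Icc a b, |f x| ≤ M) (x : ℝ) :
    |centredInterp μ a b n f x| ≤ 2 * M := by
  rw [centredInterp_eq]
  have hv : ∀ i ≤ n, |f (node a b n i)| ≤ M := fun i hi => hf _ (node_mem hab hn hi)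
  have h1 := abs_abel_le (v := fun i => f (node a b n i)) (antitone_sigmoid_brk hab hn x)
    (fun i => (sigmoid_pos _).le) (fun i => sigmoid_le_one _) hv
  have h2 := abs_abel_le (v := fun i => f (node a b n i)) (antitone_eta_brk μ hab hn)
    (fun i => (eta_pos _ _ _).le) (fun i => eta_le_one _ _ _) hv
  refine (abs_sub _ _).trans ?_
  linarith

/-- A very steep sigmoid `σ(n (u - i - 1))` differs from the step `[i < ⌊u⌋]` by at most `1/n`,
except for the two indices `i` adjacent to the jump. -/
lemma abs_sigmoid_sub_step_le {n : ℕ} (hn : 0 < n) {u : ℝ} (hu : 0 ≤ u) (i : ℕ) :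
    |sigmoid (n * (u - i - 1)) - (if i < ⌊u⌋₊ then 1 else 0)| ≤
      (if i = ⌊u⌋₊ then 1 else 0) + (if i = ⌊u⌋₊ - 1 then 1 else 0) + 1 / n := by
  have hn' : (0 : ℝ) < n := by exact_mod_cast hn
  have hk1 := Nat.floor_le hu
  have hk2 := Nat.lt_floor_add_one u
  have hp := sigmoid_pos (n * (u - i - 1))
  have hle := sigmoid_le_one (n * (u - i - 1))
  have hexp : Real.exp (-(n : ℝ)) ≤ 1 / n := by
    rw [Real.exp_neg, ← one_div]
    apply one_div_le_one_div_of_le hn'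
    linarith [Real.add_one_le_exp (n : ℝ)]
  have hinv : (0 : ℝ) < 1 / n := by positivity
  generalize ⌊u⌋₊ = k at *
  by_cases h1 : i = k
  · subst h1
    simp only [lt_irrefl, if_false, if_true, sub_zero, abs_of_pos hp]
    split_ifs <;> linarith
  by_cases h2 : i = k - 1
  · have : i < k := by omega
    simp only [this, h1, h2.symm, if_true, if_false]
    rw [abs_sub_comm, abs_of_nonneg (by linarith)]
    linarith
  simp only [h1, h2, if_false, zero_add]
  by_cases h3 : i < k
  · have h4 : (i : ℝ) + 2 ≤ k := by exact_mod_cast (by omega : i + 2 ≤ k)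
    simp only [h3, if_true]
    rw [abs_sub_comm, abs_of_nonneg (by linarith)]
    refine (one_sub_sigmoid_le_exp _).trans (le_trans (Real.exp_le_exp.2 ?_) hexp)
    nlinarith
  · have h4 : (k : ℝ) + 1 ≤ i := by exact_mod_cast (by omega : k + 1 ≤ i)
    simp only [h3, if_false, sub_zero, abs_of_pos hp]
    refine (sigmoid_le_exp _).trans (le_trans (Real.exp_le_exp.2 ?_) hexp)
    nlinarith

lemma abs_sub_interp_le {a b : ℝ} (hab : a < b) {n : ℕ} (hn : 0 < n) {f : ℝ → ℝ} {L : ℝ}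
    (hL : 0 ≤ L)
    (hf : ∀ x ∈ Set.Icc a b, ∀ y ∈ Set.Icc a b, |f x - f y| ≤ L * |x - y|)
    {x : ℝ} (hx : x ∈ Set.Icc a b) :
    |f x - (f (node a b n 0) + ∑ i ∈ Finset.range n,
        (f (node a b n (i + 1)) - f (node a b n i)) *
        sigmoid ((x - brk a b n i) / wid a b n))| ≤ 4 * L * ((b - a) / n) := by
  have hn' : (0 : ℝ) < n := by exact_mod_cast hn
  have hba : 0 < b - a := by linarith
  set h := (b - a) / n with hh
  have hpos : 0 < h := by positivity
  have hnh : n * h = b - a := by rw [hh]; field_simp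
  set u := (x - a) / h + 1 / 2 with hu
  have hux : x = a + (u - 1 / 2) * h := by rw [hu]; field_simp; ring
  have hu0 : 0 ≤ u := by
    have : 0 ≤ (x - a) / h := div_nonneg (by linarith [hx.1]) hpos.le
    linarith
  have hun : u ≤ n + 1 / 2 := by
    have : (x - a) / h ≤ n := by rw [div_le_iff₀ hpos, hnh]; linarith [hx.2]
    linarith
  have hk1 := Nat.floor_le hu0
  have hk2 := Nat.lt_floor_add_one u
  have hkn : ⌊u⌋₊ ≤ n := by
    have : (⌊u⌋₊ : ℝ) < n + 1 := by linarith
    exact_mod_cast Nat.lt_succ_iff.1 (by exact_mod_cast this)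
  have harg : ∀ i : ℕ, (x - brk a b n i) / wid a b n = n * (u - i - 1) := by
    intro i
    unfold brk wid
    rw [← hh, hux]
    field_simp
    ring
  simp only [harg]
  -- With exact steps in place of the sigmoids, the sum telescopes to the value at a nearest node.
  have htel : f (node a b n 0) + ∑ i ∈ Finset.range n,
      (f (node a b n (i + 1)) - f (node a b n i)) * (if i < ⌊u⌋₊ then 1 else 0)
      = f (node a b n ⌊u⌋₊) := by
    simp only [mul_ite, mul_one, mul_zero]
    rw [← Finset.sum_filter]
    have : (Finset.range n).filter (fun i => i < ⌊u⌋₊) = Finset.range ⌊u⌋₊ := by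
      ext i; simp; omega
    rw [this, Finset.sum_range_sub (fun i => f (node a b n i))]
    ring
  have hsplit : f x - (f (node a b n 0) + ∑ i ∈ Finset.range n,
        (f (node a b n (i + 1)) - f (node a b n i)) * sigmoid (n * (u - i - 1)))
      = (f x - f (node a b n ⌊u⌋₊)) - ∑ i ∈ Finset.range n,
        (f (node a b n (i + 1)) - f (node a b n i)) *
          (sigmoid (n * (u - i - 1)) - (if i < ⌊u⌋₊ then 1 else 0)) := by
    rw [← htel]
    simp only [mul_sub, Finset.sum_sub_distrib]
    ring
  rw [hsplit]
  have hA : |f x - f (node a b n ⌊u⌋₊)| ≤ L * h := by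
    refine (hf _ hx _ (node_mem hab hn hkn)).trans ?_
    have : x - node a b n ⌊u⌋₊ = (u - 1 / 2 - ⌊u⌋₊) * h := by
      unfold node; rw [← hh, hux]; ring
    rw [this, abs_mul, abs_of_pos hpos]
    have h5 : |u - 1 / 2 - ⌊u⌋₊| ≤ 1 := by rw [abs_le]; constructor <;> linarith
    have : |u - 1 / 2 - ⌊u⌋₊| * h ≤ 1 * h := by gcongr
    rw [one_mul] at this
    gcongr
  have hB : |∑ i ∈ Finset.range n, (f (node a b n (i + 1)) - f (node a b n i)) *
      (sigmoid (n * (u - i - 1)) - (if i < ⌊u⌋₊ then 1 else 0))| ≤ L * h * 3 := by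
    refine (Finset.abs_sum_le_sum_abs _ _).trans ?_
    have hterm : ∀ i ∈ Finset.range n, |(f (node a b n (i + 1)) - f (node a b n i)) *
        (sigmoid (n * (u - i - 1)) - (if i < ⌊u⌋₊ then 1 else 0))| ≤
        L * h * ((if i = ⌊u⌋₊ then 1 else 0) + (if i = ⌊u⌋₊ - 1 then 1 else 0) + 1 / n) := by
      intro i hi
      have hi := Finset.mem_range.1 hi
      rw [abs_mul]
      refine mul_le_mul ?_ (abs_sigmoid_sub_step_le hn hu0 i) (abs_nonneg _) (by positivity)
      refine (hf _ (node_mem hab hn hi) _ (node_mem hab hn hi.le)).trans (le_of_eq ?_)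
      have : node a b n (i + 1) - node a b n i = h := by
        unfold node; rw [← hh]; push_cast; ring
      rw [this, abs_of_pos hpos]
    refine (Finset.sum_le_sum hterm).trans ?_
    rw [← Finset.mul_sum]
    refine mul_le_mul_of_nonneg_left ?_ (by positivity)
    rw [Finset.sum_add_distrib, Finset.sum_add_distrib, Finset.sum_ite_eq', Finset.sum_ite_eq',
      Finset.sum_const, Finset.card_range, nsmul_eq_mul, mul_one_div_cancel hn'.ne']
    split_ifs <;> norm_num
  refine (abs_sub _ _).trans ?_
  linarith

lemma abs_sub_centredInterp_le (μ : Measure ℝ) [IsProbabilityMeasure μ] {a b : ℝ} (hab : a < b)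
    (hμ : ∀ᵐ x ∂μ, x ∈ Set.Icc a b) {n : ℕ} (hn : 0 < n) {f : ℝ → ℝ} {L : ℝ} (hL : 0 ≤ L)
    (hf : ∀ x ∈ Set.Icc a b, ∀ y ∈ Set.Icc a b, |f x - f y| ≤ L * |x - y|)
    (hf0 : ∫ x, f x ∂μ = 0) {x : ℝ} (hx : x ∈ Set.Icc a b) :
    |f x - centredInterp μ a b n f x| ≤ 8 * L * ((b - a) / n) := by
  have hint : Integrable f μ := by
    have hc : ContinuousOn f (Set.Icc a b) := by
      have : LipschitzOnWith ⟨L, hL⟩ f (Set.Icc a b) :=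
        LipschitzOnWith.of_dist_le_mul fun x hx y hy => hf x hx y hy
      exact this.continuousOn
    have := hc.integrableOn_Icc (μ := μ)
    rwa [IntegrableOn, Measure.restrict_eq_self_of_ae_mem hμ] at this
  set U : ℝ → ℝ := fun x => f (node a b n 0) + ∑ i ∈ Finset.range n,
        (f (node a b n (i + 1)) - f (node a b n i)) *
        sigmoid ((x - brk a b n i) / wid a b n) with hU
  have hsum : Integrable (fun x => ∑ i ∈ Finset.range n,
      (f (node a b n (i + 1)) - f (node a b n i)) *
        sigmoid ((x - brk a b n i) / wid a b n)) μ :=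
    integrable_finsetSum _ fun i _ => (integrable_sigmoid μ _ _).const_mul _
  have hUint : Integrable U μ := (integrable_const _).add hsum
  have hUI : ∫ x, U x ∂μ = f (node a b n 0) + ∑ i ∈ Finset.range n,
      (f (node a b n (i + 1)) - f (node a b n i)) * eta μ (brk a b n i) (wid a b n) := by
    rw [hU, integral_add (integrable_const _) hsum,
      integral_finsetSum _ fun i _ => (integrable_sigmoid μ _ _).const_mul _]
    simp only [integral_const_mul, eta, integral_const, probReal_univ, smul_eq_mul, one_mul]
  have hE : ∀ y ∈ Set.Icc a b, |f y - U y| ≤ 4 * L * ((b - a) / n) :=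
    fun y hy => abs_sub_interp_le hab hn hL hf hy
  have hI : |∫ y, (f y - U y) ∂μ| ≤ 4 * L * ((b - a) / n) := by
    have := norm_integral_le_of_norm_le_const (μ := μ) (f := fun y => f y - U y)
      (C := 4 * L * ((b - a) / n)) (hμ.mono fun y hy => hE y hy)
    simpa using this
  have e : f x - centredInterp μ a b n f x = (f x - U x) - ∫ y, (f y - U y) ∂μ := by
    rw [integral_sub hint hUint, hf0, hUI, centredInterp_eq, hU]
    ring
  rw [e]
  refine (abs_sub _ _).trans ?_
  linarith [hE x hx]

/-! ### Tensorisation -/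

/-- Applying `Q` in the coordinates of `T ⊆ S`, one after the other, yields `n ^ |T|` products of
basis networks in those coordinates, whose coefficients `c k` still depend on the remaining
coordinates of `S`. -/
lemma exists_tensor_approx {p : ℕ} {a b : Fin p → ℝ} (hab : ∀ j, a j < b j)
    (μ : Fin p → Measure ℝ) [∀ j, IsProbabilityMeasure (μ j)]
    {S : Finset (Fin p)} {g : (Fin p → ℝ) → ℝ}
    (hdep : ∀ x y : Fin p → ℝ, (∀ j ∈ S, x j = y j) → g x = g y)
    {n : ℕ} (hn : 0 < n) {ε : ℝ}
    (hε : ∀ j ∈ S, ∀ x : Fin p → ℝ, (∀ i, x i ∈ Set.Icc (a i) (b i)) →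
      |g x - centredInterp (μ j) (a j) (b j) n (fun t => g (Function.update x j t)) (x j)| ≤ ε)
    (T : Finset (Fin p)) (hT : T ⊆ S) :
    ∃ (ι : Type) (_ : Fintype ι) (c : ι → (Fin p → ℝ) → ℝ) (q : ι → Fin p → ℕ),
      Fintype.card ι = n ^ T.card ∧
      (∀ k, ∀ x y : Fin p → ℝ, (∀ j ∈ S \ T, x j = y j) → c k x = c k y) ∧
      ∀ x : Fin p → ℝ, (∀ j, x j ∈ Set.Icc (a j) (b j)) →
        |g x - ∑ k, c k x * ∏ j ∈ T, basisNN (μ j) (brk (a j) (b j) n (q k j))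
          (wid (a j) (b j) n) (x j)| ≤ (2 ^ T.card - 1) * ε := by
  induction T using Finset.induction_on with
  | empty =>
    refine ⟨Unit, inferInstance, fun _ => g, fun _ _ => 0, by simp, ?_, ?_⟩
    · intro _ x y h
      exact hdep x y (by simpa using h)
    · intro x _
      simp
  | insert j T hj ih =>
    obtain ⟨ι, _, c, q, hcard, hc, hA⟩ := ih ((Finset.subset_insert j T).trans hT)
    have hjS : j ∈ S := hT (Finset.mem_insert_self j T)
    refine ⟨ι × Fin n, inferInstance,
      fun k x => (c k.1 (Function.update x j (node (a j) (b j) n k.2)) -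
        c k.1 (Function.update x j (node (a j) (b j) n (k.2 + 1)))) *
        eta (μ j) (brk (a j) (b j) n k.2) (wid (a j) (b j) n),
      fun k => Function.update (q k.1) j k.2, ?_, ?_, ?_⟩
    · rw [Fintype.card_prod, hcard, Fintype.card_fin, Finset.card_insert_of_notMem hj, pow_succ]
    · intro k x y h
      have hup : ∀ t, c k.1 (Function.update x j t) = c k.1 (Function.update y j t) := by
        intro t
        refine hc _ _ _ fun i hi => ?_
        by_cases hij : i = j
        · subst hij; simp
        · rw [Function.update_of_ne hij, Function.update_of_ne hij]
          refine h i ?_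
          simp only [Finset.mem_sdiff, Finset.mem_insert] at hi ⊢
          tauto
      simp only [hup]
    · intro x hx
      set A : (Fin p → ℝ) → ℝ := fun x => ∑ k, c k x * ∏ i ∈ T,
        basisNN (μ i) (brk (a i) (b i) n (q k i)) (wid (a i) (b i) n) (x i) with hAdef
      -- The new approximant is `Q_j` applied to the old one.
      have hrep : ∑ k : ι × Fin n,
          (c k.1 (Function.update x j (node (a j) (b j) n k.2)) -
            c k.1 (Function.update x j (node (a j) (b j) n (k.2 + 1)))) *
            eta (μ j) (brk (a j) (b j) n k.2) (wid (a j) (b j) n) *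
          ∏ i ∈ insert j T, basisNN (μ i)
            (brk (a i) (b i) n (Function.update (q k.1) j (k.2 : ℕ) i))
            (wid (a i) (b i) n) (x i)
          = centredInterp (μ j) (a j) (b j) n (fun t => A (Function.update x j t)) (x j) := by
        have hprod : ∀ k t, ∏ i ∈ T, basisNN (μ i) (brk (a i) (b i) n (q k i))
            (wid (a i) (b i) n) (Function.update x j t i) = ∏ i ∈ T, basisNN (μ i)
            (brk (a i) (b i) n (q k i)) (wid (a i) (b i) n) (x i) := by
          intro k t
          refine Finset.prod_congr rfl fun i hi => ?_
          rw [Function.update_of_ne (ne_of_mem_of_not_mem hi hj)]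
        have hprod2 : ∀ k (m : ℕ), ∏ i ∈ insert j T, basisNN (μ i)
            (brk (a i) (b i) n (Function.update (q k) j m i)) (wid (a i) (b i) n) (x i)
            = basisNN (μ j) (brk (a j) (b j) n m) (wid (a j) (b j) n) (x j) * ∏ i ∈ T,
              basisNN (μ i) (brk (a i) (b i) n (q k i)) (wid (a i) (b i) n) (x i) := by
          intro k m
          rw [Finset.prod_insert hj, Function.update_self]
          congr 1
          refine Finset.prod_congr rfl fun i hi => ?_
          rw [Function.update_of_ne (ne_of_mem_of_not_mem hi hj)]
        simp only [centredInterp, hAdef, hprod, hprod2]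
        rw [Fintype.sum_prod_type_right, ← Fin.sum_univ_eq_sum_range (fun m =>
          (∑ k, c k (Function.update x j (node (a j) (b j) n m)) * ∏ i ∈ T,
            basisNN (μ i) (brk (a i) (b i) n (q k i)) (wid (a i) (b i) n) (x i) -
          ∑ k, c k (Function.update x j (node (a j) (b j) n (m + 1))) * ∏ i ∈ T,
            basisNN (μ i) (brk (a i) (b i) n (q k i)) (wid (a i) (b i) n) (x i)) *
          (eta (μ j) (brk (a j) (b j) n m) (wid (a j) (b j) n) *
            basisNN (μ j) (brk (a j) (b j) n m) (wid (a j) (b j) n) (x j)))]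
        refine Finset.sum_congr rfl fun m _ => ?_
        rw [← Finset.sum_sub_distrib, Finset.sum_mul]
        refine Finset.sum_congr rfl fun k _ => ?_
        ring
      rw [hrep]
      have hlin : g x - centredInterp (μ j) (a j) (b j) n
            (fun t => A (Function.update x j t)) (x j)
          = (g x - centredInterp (μ j) (a j) (b j) n
              (fun t => g (Function.update x j t)) (x j))
            + centredInterp (μ j) (a j) (b j) n
              (fun t => g (Function.update x j t) - A (Function.update x j t)) (x j) := by
        have : centredInterp (μ j) (a j) (b j) n
              (fun t => g (Function.update x j t) - A (Function.update x j t)) (x j)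
            = centredInterp (μ j) (a j) (b j) n (fun t => g (Function.update x j t)) (x j)
              - centredInterp (μ j) (a j) (b j) n (fun t => A (Function.update x j t)) (x j) := by
          unfold centredInterp
          rw [← Finset.sum_sub_distrib]
          exact Finset.sum_congr rfl fun i _ => by ring
        rw [this]; ring
      rw [hlin]
      refine (abs_add_le _ _).trans ?_
      have h1 := hε j hjS x hx
      have h2 := abs_centredInterp_le (μ j) (hab j) hn
        (f := fun t => g (Function.update x j t) - A (Function.update x j t))
        (M := (2 ^ T.card - 1) * ε) (fun t ht => hA _ fun i => ?_) (x j)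
      · rw [Finset.card_insert_of_notMem hj, pow_succ]
        linarith
      · by_cases hij : i = j
        · subst hij; simpa using ht
        · rw [Function.update_of_ne hij]; exact hx i

/-- **Universal approximation by TPNN for a single component** (Theorem 3.3).
Any L-Lipschitz g_{0,S} satisfying the sum-to-zero condition can be approximated by
∑_{k=1}^{K_S} β_{S,k} φ_S(·|θ_{S,k}) within C_S·|S|/(K_S^{1/|S|}+1), uniformly. -/
theorem tpnn_universal_approximation_component
    (p : ℕ) (hp : 1 ≤ p)
    (a b : Fin p → ℝ) (hab : ∀ j, a j < b j)
    (pL pU : ℝ) (hpL : 0 < pL) (hpLU : pL ≤ pU)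
    (dens : Fin p → ℝ → ℝ) (hdmeas : ∀ j, Measurable (dens j))
    (hdens : ∀ j, ∀ x ∈ Set.Icc (a j) (b j), pL ≤ dens j x ∧ dens j x ≤ pU)
    (μ : Fin p → Measure ℝ)
    (hμ : ∀ j, μ j = (volume.restrict (Set.Icc (a j) (b j))).withDensity
        (fun x => ENNReal.ofReal (dens j x)))
    [hprob : ∀ j, IsProbabilityMeasure (μ j)]
    (S : Finset (Fin p)) (hS : S.Nonempty)
    (L : ℝ) (hL : 0 < L)
    (g : (Fin p → ℝ) → ℝ)
    (hdep : ∀ x y : Fin p → ℝ, (∀ j ∈ S, x j = y j) → g x = g y)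
    (hLip : ∀ x y : Fin p → ℝ, (∀ j, x j ∈ Set.Icc (a j) (b j)) →
      (∀ j, y j ∈ Set.Icc (a j) (b j)) →
      |g x - g y| ≤ L * Real.sqrt (∑ j ∈ S, (x j - y j) ^ 2))
    (hstz : ∀ j ∈ S, ∀ z : Fin p → ℝ, (∀ i, z i ∈ Set.Icc (a i) (b i)) →
      ∫ t, g (Function.update z j t) ∂(μ j) = 0) :
    ∃ C : ℝ, 0 < C ∧ ∀ K : ℕ, 0 < K →
      ∃ (β : Fin K → ℝ) (bb γγ : Fin K → Fin p → ℝ),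
        (∀ k j, 0 < γγ k j) ∧
        ∀ x : Fin p → ℝ, (∀ j, x j ∈ Set.Icc (a j) (b j)) →
          |g x - ∑ k : Fin K, β k * ∏ j ∈ S, basisNN (μ j) (bb k j) (γγ k j) (x j)|
            < C * (S.card : ℝ) / ((K : ℝ) ^ ((S.card : ℝ)⁻¹) + 1) := by
  have hs : 0 < S.card := hS.card_pos
  have hs' : (0 : ℝ) < S.card := by exact_mod_cast hs
  have hba : ∀ j, 0 < b j - a j := fun j => sub_pos.2 (hab j)
  set D : ℝ := ∑ j, (b j - a j) with hD
  have hDj : ∀ j, b j - a j ≤ D := fun j =>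
    Finset.single_le_sum (f := fun j => b j - a j) (fun i _ => (hba i).le) (Finset.mem_univ j)
  have hDpos : 0 < D := (hba hS.choose).trans_le (hDj _)
  have hsupp : ∀ j, ∀ᵐ x ∂(μ j), x ∈ Set.Icc (a j) (b j) := by
    intro j
    rw [hμ j]
    exact (withDensity_absolutelyContinuous _ _).ae_le (ae_restrict_mem measurableSet_Icc)
  -- The total error is below `2 ^ |S| * (8 L D / n)`, and `K ^ (1 / |S|) + 1 < 3 n`.
  refine ⟨3 * (2 ^ S.card * (8 * L * D)), by positivity, fun K hK => ?_⟩
  have hK1 : (1 : ℝ) ≤ K := by exact_mod_cast hK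
  set r : ℝ := (K : ℝ) ^ ((S.card : ℝ)⁻¹) with hr
  have hr1 : 1 ≤ r := Real.one_le_rpow hK1 (by positivity)
  set n := ⌊r⌋₊ with hndef
  have hn : 0 < n := Nat.floor_pos.2 hr1
  have hn1 : (1 : ℝ) ≤ n := by exact_mod_cast hn
  have hnr : (n : ℝ) ≤ r := Nat.floor_le (by linarith)
  have hrn : r < n + 1 := Nat.lt_floor_add_one r
  have hnK : n ^ S.card ≤ K := by
    have h1 : (n : ℝ) ^ S.card ≤ r ^ S.card := by gcongr
    rw [hr, Real.rpow_inv_natCast_pow (by positivity) hs.ne'] at h1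
    exact_mod_cast h1
  have hε : ∀ j ∈ S, ∀ x : Fin p → ℝ, (∀ i, x i ∈ Set.Icc (a i) (b i)) →
      |g x - centredInterp (μ j) (a j) (b j) n (fun t => g (Function.update x j t)) (x j)|
        ≤ 8 * L * (D / n) := by
    intro j hj x hx
    have hmem : ∀ t ∈ Set.Icc (a j) (b j), ∀ i, Function.update x j t i ∈ Set.Icc (a i) (b i) := by
      intro t ht i
      by_cases hij : i = j
      · subst hij; simpa using ht
      · rw [Function.update_of_ne hij]; exact hx i
    have hl : ∀ t ∈ Set.Icc (a j) (b j), ∀ t' ∈ Set.Icc (a j) (b j),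
        |g (Function.update x j t) - g (Function.update x j t')| ≤ L * |t - t'| := by
      intro t ht t' ht'
      refine (hLip _ _ (hmem t ht) (hmem t' ht')).trans (le_of_eq ?_)
      rw [Finset.sum_eq_single_of_mem j hj fun i _ hij => by
        rw [Function.update_of_ne hij, Function.update_of_ne hij]; simp]
      simp [Real.sqrt_sq_eq_abs]
    have h1 := abs_sub_centredInterp_le (μ j) (hab j) (hsupp j) hn hL.le hl
      (hstz j hj x hx) (hx j)
    rw [Function.update_eq_self] at h1
    refine h1.trans ?_
    have := hDj j
    gcongr
  obtain ⟨ι, _, c, q, hcard, hc, hA⟩ := exists_tensor_approx hab μ hdep hn hε S subset_rfl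
  obtain ⟨e⟩ : Nonempty (ι ↪ Fin K) :=
    Function.Embedding.nonempty_of_card_le (by rw [hcard, Fintype.card_fin]; exact hnK)
  -- The coefficients no longer depend on the point; the unused indices of `Fin K` get weight `0`.
  refine ⟨Function.extend e (fun k => c k a) 0,
    fun k j => brk (a j) (b j) n (Function.extend e q 0 k j),
    fun _ j => wid (a j) (b j) n, fun _ j => wid_pos (hab j) hn, fun x hx => ?_⟩
  have hsum : ∑ k : ι, c k x * ∏ j ∈ S, basisNN (μ j) (brk (a j) (b j) n (q k j))
      (wid (a j) (b j) n) (x j) = ∑ k : Fin K, Function.extend e (fun k => c k a) 0 k *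
      ∏ j ∈ S, basisNN (μ j) (brk (a j) (b j) n (Function.extend e q 0 k j))
        (wid (a j) (b j) n) (x j) := by
    refine Fintype.sum_of_injective e e.injective _ _ (fun k hk => ?_) fun k => ?_
    · rw [Function.extend_apply' _ _ _ (by simpa using hk)]
      simp
    · rw [e.injective.extend_apply, e.injective.extend_apply, hc k x a (by simp)]
  rw [← hsum]
  refine (hA x hx).trans_lt ?_
  calc ((2 : ℝ) ^ S.card - 1) * (8 * L * (D / n))
      ≤ 2 ^ S.card * (8 * L * (D / n)) := by gcongr; linarith
    _ = 3 * (2 ^ S.card * (8 * L * D)) * 1 / (3 * n) := by field_simp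
    _ < 3 * (2 ^ S.card * (8 * L * D)) * 1 / (r + 1) := by
        refine div_lt_div_of_pos_left (by positivity) (by linarith) (by linarith)
    _ ≤ 3 * (2 ^ S.card * (8 * L * D)) * S.card / (r + 1) := by
        gcongr
        exact_mod_cast hs
end

section
/- Under the bin construction, for every k ∈ {1,…,K} one has ∫_X ℓ_k(x)·𝟙(x ∉ Ω_k) dμ(x) ≤ 2p_U/K² + 1/(1+exp(K)). -/
/-!
Only the points outside the bin within distance `δ = 1 / K ^ 2` of it (`nearBin`) matter. They form
a set of Lebesgue measure at most `2 * δ`, hence of `μ`-measure at most `2 * pU / K ^ 2`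
(`withDensity_real_le`), and there `ℓ_k ≤ 1`. At any other point of `X` outside the bin the argument
of the relevant sigmoid exceeds `δ / γ = K` in absolute value, so `ℓ_k ≤ σ(-K) = 1 / (1 + exp K)`
(`ell_le_indicator_add`). Integrating this pointwise bound against the probability measure `μ` gives
the claim.
-/

open MeasureTheory

/-- The bin functions ℓ_{k,T}: ℓ_1 = 1 − σ((x−χ₁)/γ), ℓ_T = σ((x−χ_{T−1})/γ),
and ℓ_k = σ((x−χ_{k−1})/γ) − σ((x−χ_k)/γ) for 2 ≤ k ≤ T−1. -/
noncomputable def ell (χ : ℕ → ℝ) (γ : ℝ) (T k : ℕ) (x : ℝ) : ℝ :=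
  if k = 1 then 1 - sigmoid ((x - χ 1) / γ)
  else if k = T then sigmoid ((x - χ (T - 1)) / γ)
  else sigmoid ((x - χ (k - 1)) / γ) - sigmoid ((x - χ k) / γ)

lemma sigmoid_nonneg (t : ℝ) : 0 ≤ sigmoid t := by
  unfold sigmoid; positivity

lemma sigmoid_mono_s5 {s t : ℝ} (h : s ≤ t) : sigmoid s ≤ sigmoid t := by
  unfold sigmoid
  gcongr

lemma one_sub_sigmoid (t : ℝ) : 1 - sigmoid t = sigmoid (-t) := by
  unfold sigmoid
  rw [neg_neg, Real.exp_neg]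
  have := Real.exp_pos t
  field_simp
  ring

lemma ell_nonneg {χ : ℕ → ℝ} {γ : ℝ} (hγ : 0 < γ) {K k : ℕ} (hk : χ (k - 1) ≤ χ k) (x : ℝ) :
    0 ≤ ell χ γ K k x := by
  unfold ell
  split_ifs
  · linarith [sigmoid_le_one ((x - χ 1) / γ)]
  · exact sigmoid_nonneg _
  · have : sigmoid ((x - χ k) / γ) ≤ sigmoid ((x - χ (k - 1)) / γ) :=
      sigmoid_mono_s5 (by gcongr)
    linarith

lemma ell_le_one (χ : ℕ → ℝ) (γ : ℝ) (K k : ℕ) (x : ℝ) : ell χ γ K k x ≤ 1 := by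
  unfold ell
  split_ifs
  · linarith [sigmoid_nonneg ((x - χ 1) / γ)]
  · exact sigmoid_le_one _
  · linarith [sigmoid_nonneg ((x - χ k) / γ), sigmoid_le_one ((x - χ (k - 1)) / γ)]

/-- The points outside the bin `[u, v)` at distance at most `δ` from it. -/
def nearBin (u v δ : ℝ) : Set ℝ := Set.Ico (u - δ) u ∪ Set.Icc v (v + δ)

lemma measurableSet_nearBin (u v δ : ℝ) : MeasurableSet (nearBin u v δ) :=
  measurableSet_Ico.union measurableSet_Icc

/-- The range hypothesis on `x` is needed only for the two extreme bins, where `ell` does not decay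
on the outer side. -/
lemma ell_le_indicator_add {χ : ℕ → ℝ} {γ δ t : ℝ} (hγ : 0 < γ) (hδ : δ = t * γ)
    {K k : ℕ} (hδ0 : 0 ≤ δ) {x : ℝ} (hx : x ∈ Set.Icc (χ 0) (χ K))
    (hxk : x ∉ Set.Ico (χ (k - 1)) (χ k)) :
    ell χ γ K k x ≤ (nearBin (χ (k - 1)) (χ k) δ).indicator 1 x + sigmoid (-t) := by
  by_cases hN : x ∈ nearBin (χ (k - 1)) (χ k) δ
  · rw [Set.indicator_of_mem hN, Pi.one_apply]
    linarith [ell_le_one χ γ K k x, sigmoid_nonneg (-t)]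
  rw [Set.indicator_of_notMem hN, zero_add]
  have hfar : x < χ (k - 1) - δ ∨ χ k + δ < x := by
    simp only [nearBin, Set.mem_union, Set.mem_Ico, Set.mem_Icc, not_or, not_and_or, not_le,
      not_lt] at hN hxk
    grind
  have left (h : x < χ (k - 1) - δ) : sigmoid ((x - χ (k - 1)) / γ) ≤ sigmoid (-t) := by
    apply sigmoid_mono_s5
    rw [div_le_iff₀ hγ]
    linarith
  have right (h : χ k + δ < x) : 1 - sigmoid ((x - χ k) / γ) ≤ sigmoid (-t) := by
    rw [one_sub_sigmoid]
    apply sigmoid_mono_s5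
    rw [neg_le_neg_iff, le_div_iff₀ hγ]
    linarith
  unfold ell
  split_ifs with h1 hkK
  · subst h1
    rcases hfar with h | h
    · have := hx.1
      simp only [Nat.sub_self] at h
      linarith
    · exact right h
  · subst hkK
    rcases hfar with h | h
    · exact left h
    · linarith [hx.2]
  · rcases hfar with h | h
    · linarith [left h, sigmoid_nonneg ((x - χ k) / γ)]
    · linarith [right h, sigmoid_le_one ((x - χ (k - 1)) / γ)]

lemma withDensity_real_le {S : Set ℝ} (hS : MeasurableSet S) {f : ℝ → ℝ} {C : ℝ} (hC : 0 ≤ C)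
    (hf : ∀ x ∈ S, f x ≤ C) {A : Set ℝ} (hA : MeasurableSet A) (hAfin : volume A ≠ ⊤) :
    ((volume.restrict S).withDensity (fun x => ENNReal.ofReal (f x))).real A
      ≤ C * volume.real A := by
  have h : (volume.restrict S).withDensity (fun x => ENNReal.ofReal (f x)) A
      ≤ ENNReal.ofReal C * volume A := by
    rw [withDensity_apply _ hA]
    calc ∫⁻ x in A, ENNReal.ofReal (f x) ∂(volume.restrict S)
        ≤ ∫⁻ _ in A, ENNReal.ofReal C ∂(volume.restrict S) := by
          refine lintegral_mono_ae (ae_restrict_of_ae ?_)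
          filter_upwards [ae_restrict_mem hS] with x hx
          exact ENNReal.ofReal_le_ofReal (hf x hx)
      _ = ENNReal.ofReal C * (volume.restrict S) A := setLIntegral_const _ _
      _ ≤ ENNReal.ofReal C * volume A := by gcongr; exact Measure.restrict_le_self
  have h2 := ENNReal.toReal_mono (ENNReal.mul_ne_top ENNReal.ofReal_ne_top hAfin) h
  rwa [ENNReal.toReal_mul, ENNReal.toReal_ofReal hC] at h2

lemma volume_nearBin_le (u v : ℝ) {δ : ℝ} (hδ : 0 ≤ δ) :
    volume (nearBin u v δ) ≤ ENNReal.ofReal (2 * δ) := by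
  refine (measure_union_le _ _).trans ?_
  rw [Real.volume_Ico, Real.volume_Icc, ← ENNReal.ofReal_add (by linarith) (by linarith)]
  exact ENNReal.ofReal_le_ofReal (by linarith)

/-- **Lemma A.1, first part.** Under the bin construction,
∫ ℓ_k(x)·𝟙(x ∉ Ω_k) dμ(x) ≤ 2p_U/K² + 1/(1+exp K). -/
theorem ell_integral_outside_bin_le
    (a b : ℝ) (hab : a < b)
    (pL pU : ℝ) (hpL : 0 < pL) (hpLU : pL ≤ pU)
    (dens : ℝ → ℝ) (hdmeas : Measurable dens)
    (hdens : ∀ x ∈ Set.Icc a b, pL ≤ dens x ∧ dens x ≤ pU)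
    (μ : Measure ℝ)
    (hμ : μ = (volume.restrict (Set.Icc a b)).withDensity
        (fun x => ENNReal.ofReal (dens x)))
    [hprob : IsProbabilityMeasure μ]
    (K : ℕ) (hK : 2 ≤ K)
    (χ : ℕ → ℝ) (hχ : ∀ k < K, χ k < χ (k + 1))
    (hXsub : Set.Icc a b ⊆ Set.Icc (χ 0) (χ K))
    (hmass : ∀ k, 1 ≤ k → k ≤ K →
      μ (Set.Ico (χ (k - 1)) (χ k)) = (K : ENNReal)⁻¹)
    (γ : ℝ) (hγ : γ = 1 / (K : ℝ) ^ 3) :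
    ∀ k, 1 ≤ k → k ≤ K →
      (∫ x in (Set.Ico (χ (k - 1)) (χ k))ᶜ, ell χ γ K k x ∂μ)
        ≤ 2 * pU / (K : ℝ) ^ 2 + 1 / (1 + Real.exp K) := by
  intro k hk1 hkK
  have hK0 : (0 : ℝ) < K := by exact_mod_cast (by omega : 0 < K)
  have hγ0 : 0 < γ := by rw [hγ]; positivity
  have hpU : 0 ≤ pU := by linarith
  set δ : ℝ := 1 / (K : ℝ) ^ 2 with hδ
  have hδ0 : 0 ≤ δ := by positivity
  have hδγ : δ = K * γ := by rw [hδ, hγ]; field_simp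
  have hχk : χ (k - 1) ≤ χ k := by
    have h := hχ (k - 1) (by omega)
    rw [Nat.sub_add_cancel hk1] at h
    exact h.le
  set N := nearBin (χ (k - 1)) (χ k) δ
  have hNm : MeasurableSet N := measurableSet_nearBin _ _ _
  have hvol : volume N ≤ ENNReal.ofReal (2 * δ) := volume_nearBin_le _ _ hδ0
  have hμN : μ.real N ≤ pU * (2 * δ) := by
    rw [hμ]
    refine (withDensity_real_le measurableSet_Icc hpU (fun x hx => (hdens x hx).2) hNm
      (ne_top_of_le_ne_top ENNReal.ofReal_ne_top hvol)).trans ?_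
    gcongr
    exact ENNReal.toReal_le_of_le_ofReal (by positivity) hvol
  have hsupp : ∀ᵐ x ∂μ, x ∈ Set.Icc a b := by
    rw [hμ]
    exact (withDensity_absolutelyContinuous _ _).ae_le (ae_restrict_mem measurableSet_Icc)
  have hint : Integrable (fun x => N.indicator (1 : ℝ → ℝ) x + sigmoid (-K)) μ :=
    ((integrable_const (1 : ℝ)).indicator hNm).add (integrable_const _)
  calc (∫ x in (Set.Ico (χ (k - 1)) (χ k))ᶜ, ell χ γ K k x ∂μ)
      ≤ ∫ x in (Set.Ico (χ (k - 1)) (χ k))ᶜ, (N.indicator (1 : ℝ → ℝ) x + sigmoid (-K)) ∂μ := by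
        -- The nonnegativity of `ell` replaces a proof of its integrability.
        refine integral_mono_of_nonneg (.of_forall fun x => ell_nonneg hγ0 hχk x)
          hint.integrableOn ?_
        filter_upwards [ae_restrict_of_ae hsupp, ae_restrict_mem measurableSet_Ico.compl]
          with x hx hxk
        exact ell_le_indicator_add hγ0 hδγ hδ0 (hXsub hx) hxk
    _ ≤ ∫ x, (N.indicator (1 : ℝ → ℝ) x + sigmoid (-K)) ∂μ := by
        refine setIntegral_le_integral hint (.of_forall fun x => ?_)
        exact add_nonneg (Set.indicator_nonneg (fun _ _ => zero_le_one) x) (sigmoid_nonneg _)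
    _ = μ.real N + sigmoid (-K) := by
        have hind : Integrable (N.indicator (1 : ℝ → ℝ)) μ :=
          (integrable_const (1 : ℝ)).indicator hNm
        rw [integral_add hind (integrable_const _), integral_indicator_one hNm]
        simp
    _ ≤ 2 * pU / (K : ℝ) ^ 2 + 1 / (1 + Real.exp K) := by
        have h : sigmoid (-K) = 1 / (1 + Real.exp K) := by rw [sigmoid, neg_neg]
        rw [h]
        have : pU * (2 * δ) = 2 * pU / (K : ℝ) ^ 2 := by rw [hδ]; ring
        linarith
end

section
/- Under the bin construction, for every k ∈ {1,…,K} and every x ∈ X with χ_{k−1} + 1/K² ≤ x ≤ χ_k − 1/K², one has ℓ_k(x) ≥ σ(K) − σ(−K); in particular, since K ≥ 2, ℓ_k(x) ≥ 1/2. -/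
/-!
Since `γ = K⁻³`, a distance `K⁻²` from a knot `χ j` becomes a distance `K` after rescaling by `γ⁻¹`.
As `σ` is increasing with values in `(0, 1)`, the rising term of `ℓ_k` is at least `σ(K)` and the
falling one is at most `σ(-K)`; at the end bins the missing term is replaced by the constant `1`
or `0`, which only helps. Finally `σ(-K) = 1 - σ(K)`, and `exp K ≥ 1 + K ≥ 3` gives
`σ(K) ≥ 3/4`, hence `σ(K) - σ(-K) ≥ 1/2`.
-/

open MeasureTheory

theorem sigmoid_eq_real (t : ℝ) : sigmoid t = Real.sigmoid t := by
  rw [sigmoid, Real.sigmoid_def, one_div]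

/-- Well inside its bin, ℓ_k is at least σ(K) − σ(−K), and in particular ≥ 1/2. -/
theorem ell_large_inside_bin
    (a b : ℝ) (hab : a < b)
    (pL pU : ℝ) (hpL : 0 < pL) (hpLU : pL ≤ pU)
    (dens : ℝ → ℝ) (hdmeas : Measurable dens)
    (hdens : ∀ x ∈ Set.Icc a b, pL ≤ dens x ∧ dens x ≤ pU)
    (μ : Measure ℝ)
    (hμ : μ = (volume.restrict (Set.Icc a b)).withDensity
        (fun x => ENNReal.ofReal (dens x)))
    [hprob : IsProbabilityMeasure μ]
    (K : ℕ) (hK : 2 ≤ K)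
    (χ : ℕ → ℝ) (hχ : ∀ k < K, χ k < χ (k + 1))
    (hXsub : Set.Icc a b ⊆ Set.Icc (χ 0) (χ K))
    (hmass : ∀ k, 1 ≤ k → k ≤ K →
      μ (Set.Ico (χ (k - 1)) (χ k)) = (K : ENNReal)⁻¹)
    (γ : ℝ) (hγ : γ = 1 / (K : ℝ) ^ 3) :
    ∀ k, 1 ≤ k → k ≤ K → ∀ x ∈ Set.Icc a b,
      χ (k - 1) + 1 / (K : ℝ) ^ 2 ≤ x → x ≤ χ k - 1 / (K : ℝ) ^ 2 →
      sigmoid K - sigmoid (-(K : ℝ)) ≤ ell χ γ K k x ∧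
        (1 : ℝ) / 2 ≤ ell χ γ K k x := by
  intro k hk1 hkK x _ hl hr
  have hK2 : (2 : ℝ) ≤ K := by exact_mod_cast hK
  have hK0 : (0 : ℝ) < K := by linarith
  have hγ0 : 0 < γ := by rw [hγ]; positivity
  have hKγ : (K : ℝ) * γ = 1 / (K : ℝ) ^ 2 := by rw [hγ]; field_simp
  have h_rise : Real.sigmoid K ≤ Real.sigmoid ((x - χ (k - 1)) / γ) := by
    apply Real.sigmoid_le
    rw [le_div_iff₀ hγ0, hKγ]
    linarith
  have h_fall : Real.sigmoid ((x - χ k) / γ) ≤ Real.sigmoid (-(K : ℝ)) := by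
    apply Real.sigmoid_le
    rw [div_le_iff₀ hγ0, neg_mul, hKγ]
    linarith
  have h_main : sigmoid K - sigmoid (-(K : ℝ)) ≤ ell χ γ K k x := by
    unfold ell
    simp only [sigmoid_eq_real]
    split_ifs with h1 h2
    · subst h1
      linarith [Real.sigmoid_le_one K]
    · subst h2
      linarith [Real.sigmoid_nonneg (-(k : ℝ))]
    · linarith
  refine ⟨h_main, le_trans ?_ h_main⟩
  simp only [sigmoid_eq_real, Real.sigmoid_neg]
  have h_exp : Real.exp (-(K : ℝ)) ≤ 1 / 3 := by
    rw [Real.exp_neg, one_div]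
    exact inv_anti₀ (by norm_num) (by linarith [Real.add_one_le_exp (K : ℝ)])
  have h_sig : (3 : ℝ) / 4 ≤ Real.sigmoid K := by
    rw [Real.sigmoid_def, ← one_div, le_div_iff₀ (by positivity)]
    linarith
  linarith
end
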